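/- Let F ~ SSBM(N,K,p,q) with p = α·ρ(N), q = β·ρ(N) for constants 0 < α, β < ∞ and ρ(N) → 0 as N → ∞, and let C = B F Bᵀ be measured under the r-homogeneous and CO-1 constraints, with K fixed. Then the probability that the MAP estimator fails to recover the c-node profile vector x ∈ [K]^M from C (up to relabeling of the community indices) tends to zero in either of the following regimes: (i) M stays finite, r√ρ(N) → ∞, and α ≠ β; (ii) M, N → ∞ and (α+β)/2 − √(αβ) > lim_{M→∞} [ (K/2) · log M / (r² ρ(N) M) ]. -/

import Mathlib

open MeasureTheory ProbabilityTheory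
open scoped ENNReal NNReal

/-- Law (on `ℕ`, via the indicator `true ↦ 1`) of a Bernoulli random variable with
success probability `p`. -/
noncomputable def bernNat (p : ℝ≥0∞) (hp : p ≤ 1) : PMF ℕ :=
  (PMF.bernoulli p.toNNReal (by simpa using ENNReal.toNNReal_mono ENNReal.one_ne_top hp)).map fun b => if b then 1 else 0

/-- Law of the sum of `n` independent copies of an `ℕ`-valued random variable with law `μ`. -/
noncomputable def iidSum (μ : PMF ℕ) : ℕ → PMF ℕ
  | 0 => PMF.pure 0
  | n + 1 => (iidSum μ n).bind fun s => μ.map fun x => s + x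

/-- The binomial law `Binomial(n,p)` on `ℕ`. -/
noncomputable def binomialNat (p : ℝ≥0∞) (hp : p ≤ 1) (n : ℕ) : PMF ℕ :=
  iidSum (bernNat p hp) n

/-!
A MAP estimate that is not a relabeling of the true profile `x` has a relabeling `y`, at minimal
Hamming distance from `x` in its orbit, whose likelihood is at least that of `x`. By the
Bhattacharyya bound this costs `exp (-I)` for each pair of nodes on which the partitions given by
`x` and `y` disagree, where `I = r² ρ ((α + β) / 2 - √(α β))`, and a union bound over `y` remains.
If `M` is bounded, there are boundedly many `y`, each with at least one disagreement.

If `M → ∞`, all but an exponentially small fraction of the profiles are balanced, by Chernoff's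
bound. For a balanced `x`, a `y` at Hamming distance `d` which is small compared with `M` has about
`2 M d / K` disagreements or more, since each of the `d` relabeled nodes changes its relation to the
two communities it leaves and enters. These `y` contribute at most
`(1 + (K - 1) exp (-2 I M / K)) ^ M - 1`, which tends to zero when `I M` exceeds `(K / 2) log M` by
a constant factor larger than one. All other `y` have at least of order `M²` disagreements, which
outweighs their number `K ^ M`.
-/

/-! ### Binomial laws -/

lemma map_add_bernNat_apply (p : ℝ≥0∞) (hp : p ≤ 1) (s k : ℕ) :
    ((bernNat p hp).map fun x => s + x) k =
      (if k = s then 1 - p else 0) + (if k = s + 1 then p else 0) := by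
  have hp_top : p ≠ ⊤ := ne_top_of_le_ne_top ENNReal.one_ne_top hp
  simp [bernNat, PMF.map_comp, PMF.map_apply, PMF.bernoulli, hp_top, add_comm]

lemma binomialNat_succ_apply (p : ℝ≥0∞) (hp : p ≤ 1) (n k : ℕ) :
    binomialNat p hp (n + 1) k =
      binomialNat p hp n k * (1 - p) + if k = 0 then 0 else binomialNat p hp n (k - 1) * p := by
  simp only [binomialNat, iidSum, PMF.bind_apply, map_add_bernNat_apply, mul_add]
  rw [ENNReal.tsum_add, tsum_eq_single k fun s hs => by simp [hs.symm]]
  rcases k with _ | k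
  · simp
  · rw [tsum_eq_single k fun s hs => by simp [hs.symm]]
    simp

lemma binomialNat_apply (p : ℝ≥0∞) (hp : p ≤ 1) (n k : ℕ) :
    binomialNat p hp n k = p ^ k * (1 - p) ^ (n - k) * n.choose k := by
  induction n generalizing k with
  | zero => rcases k with _ | k <;> simp [binomialNat, iidSum]
  | succ n ih =>
    rw [binomialNat_succ_apply, ih]
    rcases k with _ | k
    · simp [pow_succ]
    · rw [if_neg k.succ_ne_zero, Nat.add_sub_cancel, ih, Nat.choose_succ_succ,
        Nat.add_sub_add_right]
      rcases lt_or_ge k n with hk | hk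
      · rw [show n - k = n - (k + 1) + 1 by lia]
        push_cast
        ring
      · rw [Nat.choose_eq_zero_of_lt (Nat.lt_succ_of_le hk)]
        push_cast
        ring

/-! ### The Bhattacharyya coefficient -/

/-- The Bhattacharyya coefficient `∑ √(P a Q a)`, the affinity that controls the error of a
likelihood comparison between `P` and `Q`. It takes values in `ℝ≥0∞`, where every series
converges. -/
noncomputable def bhattacharyya {α : Type*} (P Q : PMF α) : ℝ≥0∞ :=
  ∑' a, (P a * Q a) ^ (1 / 2 : ℝ)

lemma mul_self_rpow_half (x : ℝ≥0∞) : (x * x) ^ (1 / 2 : ℝ) = x := by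
  rw [← sq, ← ENNReal.rpow_natCast, ← ENNReal.rpow_mul]
  norm_num

lemma bhattacharyya_self {α : Type*} (P : PMF α) : bhattacharyya P P = 1 := by
  simp only [bhattacharyya, mul_self_rpow_half, PMF.tsum_coe]

lemma bhattacharyya_comm {α : Type*} (P Q : PMF α) : bhattacharyya P Q = bhattacharyya Q P := by
  simp only [bhattacharyya, mul_comm]

lemma bhattacharyya_binomialNat (p q : ℝ≥0∞) (hp : p ≤ 1) (hq : q ≤ 1) (n : ℕ) :
    bhattacharyya (binomialNat p hp n) (binomialNat q hq n) =
      ((p * q) ^ (1 / 2 : ℝ) + ((1 - p) * (1 - q)) ^ (1 / 2 : ℝ)) ^ n := by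
  have hsqrt_pow (x : ℝ≥0∞) (m : ℕ) : (x ^ (1 / 2 : ℝ)) ^ m = (x ^ m) ^ (1 / 2 : ℝ) := by
    rw [← ENNReal.rpow_natCast, ← ENNReal.rpow_natCast, ← ENNReal.rpow_mul, ← ENNReal.rpow_mul,
      mul_comm]
  rw [bhattacharyya, add_pow, tsum_eq_sum (s := Finset.range (n + 1))]
  · refine Finset.sum_congr rfl fun k _ => ?_
    rw [← mul_self_rpow_half (n.choose k : ℝ≥0∞)]
    simp_rw [hsqrt_pow, ← ENNReal.mul_rpow_of_nonneg _ _ (one_div_nonneg.2 zero_le_two),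
      binomialNat_apply]
    congr 1
    ring
  · intro k hk
    rw [binomialNat_apply, Nat.choose_eq_zero_of_lt (by simpa using hk)]
    simp

lemma sqrt_mul_le_half_add {a b : ℝ} (ha : 0 ≤ a) (hb : 0 ≤ b) : √(a * b) ≤ (a + b) / 2 :=
  Real.sqrt_le_iff.2 ⟨by positivity, by nlinarith [sq_nonneg (a - b)]⟩

lemma sqrt_mul_lt_half_add {a b : ℝ} (ha : 0 ≤ a) (hb : 0 ≤ b) (h : a ≠ b) :
    √(a * b) < (a + b) / 2 := by
  refine (Real.sqrt_lt (by positivity) (by positivity)).2 ?_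
  linarith [sq_pos_of_ne_zero (sub_ne_zero.2 h)]

lemma bhattacharyya_binomialNat_le_exp {α β ρ : ℝ} (hα : 0 ≤ α) (hβ : 0 ≤ β) (hρ : 0 ≤ ρ)
    (hp : α * ρ ≤ 1) (hq : β * ρ ≤ 1) (n : ℕ) :
    bhattacharyya
        (binomialNat (ENNReal.ofReal (α * ρ)) (ENNReal.ofReal_le_one.2 hp) n)
        (binomialNat (ENNReal.ofReal (β * ρ)) (ENNReal.ofReal_le_one.2 hq) n) ≤
      ENNReal.ofReal (Real.exp (-(n * ρ * ((α + β) / 2 - √(α * β))))) := by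
  have hp' : 0 ≤ 1 - α * ρ := sub_nonneg.2 hp
  have hq' : 0 ≤ 1 - β * ρ := sub_nonneg.2 hq
  have hsucc : √(α * ρ * (β * ρ)) = ρ * √(α * β) := by
    rw [show α * ρ * (β * ρ) = ρ ^ 2 * (α * β) by ring, Real.sqrt_mul (sq_nonneg ρ),
      Real.sqrt_sq hρ]
  have hfail : √((1 - α * ρ) * (1 - β * ρ)) ≤ 1 - (α + β) / 2 * ρ :=
    (sqrt_mul_le_half_add hp' hq').trans_eq (by ring)
  have hbern : √(α * ρ * (β * ρ)) + √((1 - α * ρ) * (1 - β * ρ)) ≤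
      Real.exp (-(ρ * ((α + β) / 2 - √(α * β)))) := by
    linarith [Real.add_one_le_exp (-(ρ * ((α + β) / 2 - √(α * β))))]
  have hcoe (a b : ℝ) (ha : 0 ≤ a) (hb : 0 ≤ b) :
      (ENNReal.ofReal a * ENNReal.ofReal b) ^ (1 / 2 : ℝ) = ENNReal.ofReal √(a * b) := by
    rw [← ENNReal.ofReal_mul ha, ENNReal.ofReal_rpow_of_nonneg (mul_nonneg ha hb) (by norm_num),
      Real.sqrt_eq_rpow]
  rw [bhattacharyya_binomialNat, ← ENNReal.ofReal_one, ← ENNReal.ofReal_sub _ (by positivity),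
    ← ENNReal.ofReal_sub _ (by positivity), hcoe _ _ (by positivity) (by positivity),
    hcoe _ _ hp' hq', ← ENNReal.ofReal_add (by positivity) (by positivity),
    ← ENNReal.ofReal_pow (by positivity)]
  refine ENNReal.ofReal_le_ofReal ((pow_le_pow_left₀ (by positivity) hbern n).trans_eq ?_)
  rw [← Real.exp_nat_mul]
  ring_nf

lemma tsum_prod_le_prod_tsum {ι α : Type*} [Fintype ι] (f : ι → α → ℝ≥0∞) :
    ∑' g : ι → α, ∏ i, f i (g i) ≤ ∏ i, ∑' a, f i a := by
  classical
  refine ENNReal.summable.tsum_le_of_sum_le fun s => ?_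
  have hs : s ⊆ Fintype.piFinset fun i => s.image fun g => g i := fun g hg =>
    Fintype.mem_piFinset.2 fun i => Finset.mem_image_of_mem _ hg
  calc ∑ g ∈ s, ∏ i, f i (g i)
      ≤ ∑ g ∈ Fintype.piFinset fun i => s.image fun g => g i, ∏ i, f i (g i) :=
        Finset.sum_le_sum_of_subset hs
    _ = ∏ i, ∑ a ∈ s.image fun g => g i, f i a := (Finset.prod_univ_sum _ _).symm
    _ ≤ ∏ i, ∑' a, f i a := Finset.prod_le_prod' fun i _ => ENNReal.sum_le_tsum _

/-! ### Labelings of a finite set of nodes -/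

lemma exists_perm_comp_eq {ι κ : Type*} [Finite κ] {x y : ι → κ}
    (h : ∀ i j, x i = x j ↔ y i = y j) : ∃ σ : Equiv.Perm κ, y = σ ∘ x := by
  classical
  have hker : Setoid.ker x = Setoid.ker y := Setoid.ext h
  let e : Set.range x ≃ Set.range y := (Setoid.quotientKerEquivRange x).symm.trans
    ((Quotient.congrRight fun i j => by rw [hker]).trans (Setoid.quotientKerEquivRange y))
  have he (i : ι) : e ⟨x i, i, rfl⟩ = ⟨y i, i, rfl⟩ := by
    have hi : (Setoid.quotientKerEquivRange x).symm ⟨x i, i, rfl⟩ = Quotient.mk _ i :=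
      (Equiv.symm_apply_eq _).2 rfl
    simp only [e, Equiv.trans_apply, hi]
    rfl
  refine ⟨e.extendSubtype, funext fun i => ?_⟩
  rw [Function.comp_apply, Equiv.extendSubtype_apply_of_mem e (x i) ⟨i, rfl⟩, he]

section Labelings

variable {ι κ : Type*} [Fintype ι] [DecidableEq κ]

/-- The nodes with label `a`. -/
def community (x : ι → κ) (a : κ) : Finset ι := {i | x i = a}

/-- The nodes labelled `a` by `x` and `b` by `y`: a cell of the contingency table of the two
labelings. -/
def overlap (x y : ι → κ) (a b : κ) : Finset ι := {i | x i = a ∧ y i = b}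

lemma exists_card_community_le_mul_card_overlap [Fintype κ] (x y : ι → κ) (a : κ) :
    ∃ b, (community x a).card ≤ Fintype.card κ * (overlap x y a b).card := by
  obtain ⟨b, -, hb⟩ := Finset.exists_max_image Finset.univ (fun b => (overlap x y a b).card)
    ⟨a, Finset.mem_univ a⟩
  refine ⟨b, ?_⟩
  rw [mul_comm]
  refine Finset.card_le_mul_card_image_of_maps_to (f := y) (fun i _ => Finset.mem_univ (y i)) _
    fun b' hb' => ?_
  rw [community, Finset.filter_filter]
  exact hb b' hb'

/-- The labelings other than `x` whose relabelings are at least as far from `x` as they are. By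
minimality none of them is a relabeling of `x`, and every labeling which is not a relabeling of
`x` has a relabeling among them. -/
def competitors [DecidableEq ι] [Fintype κ] (x : ι → κ) : Finset (ι → κ) :=
  {y | y ≠ x ∧ ∀ σ : Equiv.Perm κ, hammingDist x y ≤ hammingDist (σ ∘ x) y}

lemma ne_perm_comp_of_mem_competitors [DecidableEq ι] [Fintype κ] {x y : ι → κ}
    (hy : y ∈ competitors x) (σ : Equiv.Perm κ) : y ≠ σ ∘ x := by
  obtain ⟨hne, hmin⟩ := (Finset.mem_filter_univ _).1 hy
  rintro rfl
  exact hne (hammingDist_eq_zero.1 (Nat.le_zero.1 ((hmin σ).trans_eq (hammingDist_self _)))).symm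

lemma exists_perm_comp_mem_competitors [DecidableEq ι] [Fintype κ] {x y : ι → κ}
    (h : ∀ σ : Equiv.Perm κ, y ≠ σ ∘ x) : ∃ σ : Equiv.Perm κ, σ ∘ y ∈ competitors x := by
  obtain ⟨σ, hσ⟩ := Finite.exists_min fun σ : Equiv.Perm κ => hammingDist x (σ ∘ y)
  refine ⟨σ, (Finset.mem_filter_univ _).2 ⟨fun hx => h σ⁻¹ ?_, fun τ => ?_⟩⟩
  · rw [← hx, ← Function.comp_assoc, ← Equiv.Perm.coe_mul, inv_mul_cancel, Equiv.Perm.coe_one,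
      Function.id_comp]
  · calc hammingDist x (σ ∘ y) ≤ hammingDist x ((τ⁻¹ * σ) ∘ y) := hσ (τ⁻¹ * σ)
      _ = hammingDist (τ ∘ x) (σ ∘ y) := by
        rw [← hammingDist_comp (fun _ => τ) (fun _ => τ.injective)]
        simp [Function.comp_def]

end Labelings

/-! ### Disagreements between labelings -/

/-- Unordered pairs of distinct nodes, encoded as increasing ordered pairs. -/
abbrev NodePair (ι : Type*) [LinearOrder ι] : Type _ := {e : ι × ι // e.1 < e.2}

section Disagreements

variable {ι κ : Type*} [Fintype ι] [LinearOrder ι] [DecidableEq κ]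

/-- The pairs of nodes on which the partitions induced by two labelings disagree. -/
def disagreements (x y : ι → κ) : Finset (NodePair ι) :=
  {e | ¬(x e.1.1 = x e.1.2 ↔ y e.1.1 = y e.1.2)}

lemma card_disagreements_pos [Finite κ] {x y : ι → κ} (h : ∀ σ : Equiv.Perm κ, y ≠ σ ∘ x) :
    0 < (disagreements x y).card := by
  contrapose! h
  have hlt (i j : ι) (hij : i < j) : x i = x j ↔ y i = y j := by
    by_contra hd
    have hmem : ⟨(i, j), hij⟩ ∈ disagreements x y := by simpa [disagreements] using hd
    simp [Finset.card_eq_zero.1 (Nat.le_zero.1 h)] at hmem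
  refine exists_perm_comp_eq fun i j => ?_
  rcases lt_trichotomy i j with hij | rfl | hij
  · exact hlt i j hij
  · simp
  · rw [eq_comm, hlt j i hij, eq_comm]

lemma sum_card_le_card_disagreements {x y : ι → κ} {s : Finset ι} {t : ι → Finset ι}
    (hdis : ∀ i ∈ s, ∀ j ∈ t i, ¬(x i = x j ↔ y i = y j))
    (hasymm : ∀ i ∈ s, ∀ j ∈ t i, j ∈ s → i ∉ t j) :
    ∑ i ∈ s, (t i).card ≤ (disagreements x y).card := by
  classical
  let orient (e : NodePair ι) : Σ _ : ι, ι :=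
    if e.1.1 ∈ s ∧ e.1.2 ∈ t e.1.1 then ⟨e.1.1, e.1.2⟩ else ⟨e.1.2, e.1.1⟩
  rw [← Finset.card_sigma]
  refine Finset.card_le_card_of_surjOn orient ?_
  rintro ⟨i, j⟩ hij
  obtain ⟨hi, hj⟩ : i ∈ s ∧ j ∈ t i := by simpa using hij
  have hd := hdis i hi j hj
  rcases lt_trichotomy i j with hlt | rfl | hlt
  · exact ⟨⟨(i, j), hlt⟩, by simpa [disagreements] using hd, by simp [orient, hi, hj]⟩
  · simp at hd
  · refine ⟨⟨(j, i), hlt⟩, ?_, ?_⟩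
    · simpa [disagreements, eq_comm] using hd
    · exact if_neg fun h => hasymm i hi j hj h.1 h.2

lemma hammingDist_mul_le_card_disagreements {x y : ι → κ} {s : ℝ}
    (hs : ∀ a, s ≤ (community x a).card) :
    hammingDist x y * (2 * s - hammingDist x y) ≤ (disagreements x y).card := by
  classical
  let U : Finset ι := {i | x i ≠ y i}
  let t (i : ι) : Finset ι := {j | x j = y j ∧ (x j = x i ∨ x j = y i)}
  have ht : ∀ i ∈ U, 2 * s - U.card ≤ (t i).card := by
    intro i hi
    have hne : x i ≠ y i := by simpa [U] using hi
    have hdisj : Disjoint (community x (x i)) (community x (y i)) := by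
      rw [community, community, Finset.disjoint_filter]
      exact fun j _ h h' => hne (h.symm.trans h')
    have hsub : community x (x i) ∪ community x (y i) ⊆ t i ∪ U := by
      intro j
      simp only [community, t, U, Finset.mem_union, Finset.mem_filter_univ]
      tauto
    have hcard := (Finset.card_le_card hsub).trans (Finset.card_union_le _ _)
    rw [Finset.card_union_of_disjoint hdisj] at hcard
    have hcard' : ((community x (x i)).card : ℝ) + (community x (y i)).card ≤
        (t i).card + U.card := by exact_mod_cast hcard
    linarith [hs (x i), hs (y i)]
  have hpairs : ∑ i ∈ U, (t i).card ≤ (disagreements x y).card := by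
    refine sum_card_le_card_disagreements ?_ ?_ <;> simp only [U, t, Finset.mem_filter_univ] <;>
      grind
  calc (hammingDist x y : ℝ) * (2 * s - hammingDist x y) = ∑ i ∈ U, (2 * s - U.card) := by
        rw [Finset.sum_const, nsmul_eq_mul]
        rfl
    _ ≤ ∑ i ∈ U, ((t i).card : ℝ) := Finset.sum_le_sum ht
    _ ≤ (disagreements x y).card := by exact_mod_cast hpairs

lemma card_overlap_mul_le_card_disagreements (x y : ι → κ) {a a' b b' : κ}
    (h : ¬(a = a' ↔ b = b')) :
    (overlap x y a b).card * (overlap x y a' b').card ≤ (disagreements x y).card := by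
  rw [← smul_eq_mul, ← Finset.sum_const]
  refine sum_card_le_card_disagreements ?_ ?_ <;>
    simp only [overlap, Finset.mem_filter_univ] <;> grind

lemma hammingDist_perm_comp_mul_le_card_disagreements [Fintype κ] {x y : ι → κ} {s : ℕ}
    {σ : Equiv.Perm κ} (hs : ∀ a, s ≤ Fintype.card κ * (overlap x y a (σ a)).card) :
    hammingDist (σ ∘ x) y * s ≤ Fintype.card κ ^ 3 * (disagreements x y).card := by
  let U : Finset ι := {i | σ (x i) ≠ y i}
  have hcell (c : κ × κ) : ({i ∈ U | (x i, y i) = c}).card * s ≤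
      Fintype.card κ * (disagreements x y).card := by
    by_cases hc : c.2 = σ c.1
    · have hempty : ({i ∈ U | (x i, y i) = c}) = ∅ := by
        simp only [U, Finset.filter_filter, Finset.filter_eq_empty_iff]
        grind
      simp [hempty]
    · have hle : ({i ∈ U | (x i, y i) = c}).card ≤ (overlap x y c.1 c.2).card :=
        Finset.card_le_card fun i => by simp [overlap, Prod.ext_iff]
      have hdis := card_overlap_mul_le_card_disagreements x y (a := c.1) (a' := c.1)
        (b := c.2) (b' := σ c.1) (by simp [hc])
      nlinarith [Nat.mul_le_mul hle (hs c.1), Nat.mul_le_mul_left (Fintype.card κ) hdis]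
  calc hammingDist (σ ∘ x) y * s = U.card * s := rfl
    _ = ∑ c : κ × κ, ({i ∈ U | (x i, y i) = c}).card * s := by
        rw [Finset.card_eq_sum_card_fiberwise (f := fun i => (x i, y i)) (t := Finset.univ)
          (fun _ _ => by simp), Finset.sum_mul]
    _ ≤ ∑ _c : κ × κ, Fintype.card κ * (disagreements x y).card :=
        Finset.sum_le_sum fun c _ => hcell c
    _ = Fintype.card κ ^ 3 * (disagreements x y).card := by
        simp only [Finset.sum_const, Finset.card_univ, Fintype.card_prod, smul_eq_mul]
        ring

/-- Match each community of `x` with the community of `y` it meets most. If two communities are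
matched with the same one, their overlaps with it disagree everywhere; otherwise the matching is a
relabeling, and the overlap of a matched pair disagrees with every unmatched cell. -/
lemma min_mul_le_card_disagreements [Fintype κ] {x y : ι → κ} {s d : ℕ}
    (hs : ∀ a, s ≤ (community x a).card)
    (hd : ∀ σ : Equiv.Perm κ, d ≤ hammingDist (σ ∘ x) y) :
    min s d * s ≤ Fintype.card κ ^ 3 * (disagreements x y).card := by
  choose f hf using exists_card_community_le_mul_card_overlap x y
  have hs' (a : κ) : s ≤ Fintype.card κ * (overlap x y a (f a)).card := (hs a).trans (hf a)
  by_cases hinj : Function.Injective f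
  · let σ : Equiv.Perm κ := Equiv.ofBijective f (Finite.injective_iff_bijective.1 hinj)
    calc min s d * s ≤ hammingDist (σ ∘ x) y * s := by
          gcongr
          exact (min_le_right s d).trans (hd σ)
      _ ≤ Fintype.card κ ^ 3 * (disagreements x y).card :=
          hammingDist_perm_comp_mul_le_card_disagreements hs'
  · obtain ⟨a, a', hff, hne⟩ := Function.not_injective_iff.1 hinj
    have hcard : 0 < Fintype.card κ := Fintype.card_pos_iff.2 ⟨a⟩
    calc min s d * s ≤ (Fintype.card κ * (overlap x y a (f a)).card) *
          (Fintype.card κ * (overlap x y a' (f a')).card) := by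
          gcongr
          · exact (min_le_left s d).trans (hs' a)
          · exact hs' a'
      _ = Fintype.card κ ^ 2 * ((overlap x y a (f a)).card * (overlap x y a' (f a')).card) := by
          ring
      _ ≤ Fintype.card κ ^ 3 * (disagreements x y).card := by
          gcongr
          · norm_num
          · exact card_overlap_mul_le_card_disagreements x y (by simp [hff, hne])

end Disagreements

/-! ### The weighted community model and its MAP error -/

/-- The estimator `est` maximizes the posterior probability of the labels. The posterior is
compared through joint point masses, to which it is proportional. -/
def IsMAP {ι κ W Ω : Type*} [LinearOrder ι] [MeasurableSpace Ω] (μ : Measure Ω)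
    (X : Ω → ι → κ) (G : Ω → NodePair ι → W) (est : (NodePair ι → W) → ι → κ) : Prop :=
  ∀ g y, μ {ω | X ω = y ∧ G ω = g} ≤ μ {ω | X ω = est g ∧ G ω = g}

/-- The event that `est` does not recover `X` up to relabeling. -/
def recoveryFailure {ι κ W Ω : Type*} [LinearOrder ι] (X : Ω → ι → κ)
    (G : Ω → NodePair ι → W) (est : (NodePair ι → W) → ι → κ) : Set Ω :=
  {ω | ∀ σ : Equiv.Perm κ, est (G ω) ≠ σ ∘ X ω}

section WeightedSBM

variable {ι κ W Ω : Type*} [Fintype ι] [LinearOrder ι] [DecidableEq κ]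

/-- The likelihood of the edge weights `g` given the labels `x`: independent weights with law `P`
inside communities and `Q` across them. -/
noncomputable def likelihood (P Q : PMF W) (x : ι → κ) (g : NodePair ι → W) : ℝ≥0∞ :=
  ∏ e, (if x e.1.1 = x e.1.2 then P else Q) (g e)

lemma likelihood_perm_comp (P Q : PMF W) (σ : Equiv.Perm κ) (x : ι → κ) (g : NodePair ι → W) :
    likelihood P Q (σ ∘ x) g = likelihood P Q x g := by
  simp [likelihood]

lemma tsum_likelihood_le_one (P Q : PMF W) (x : ι → κ) : ∑' g, likelihood P Q x g ≤ 1 :=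
  (tsum_prod_le_prod_tsum _).trans_eq <| by simp only [PMF.tsum_coe, Finset.prod_const_one]

lemma tsum_sqrt_likelihood_mul_le (P Q : PMF W) (x y : ι → κ) :
    ∑' g, (likelihood P Q x g * likelihood P Q y g) ^ (1 / 2 : ℝ) ≤
      bhattacharyya P Q ^ (disagreements x y).card := by
  let law (z : ι → κ) (e : NodePair ι) : PMF W := if z e.1.1 = z e.1.2 then P else Q
  have hlaw (e : NodePair ι) : bhattacharyya (law x e) (law y e) =
      if ¬(x e.1.1 = x e.1.2 ↔ y e.1.1 = y e.1.2) then bhattacharyya P Q else 1 := by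
    by_cases hx : x e.1.1 = x e.1.2 <;> by_cases hy : y e.1.1 = y e.1.2 <;>
      simp [law, hx, hy, bhattacharyya_self, bhattacharyya_comm Q P]
  calc ∑' g, (likelihood P Q x g * likelihood P Q y g) ^ (1 / 2 : ℝ)
      = ∑' g : NodePair ι → W, ∏ e, (law x e (g e) * law y e (g e)) ^ (1 / 2 : ℝ) := by
        simp_rw [ENNReal.prod_rpow_of_nonneg (one_div_nonneg.2 zero_le_two),
          Finset.prod_mul_distrib, likelihood, law]
    _ ≤ ∏ e, bhattacharyya (law x e) (law y e) :=
        tsum_prod_le_prod_tsum fun e a => (law x e a * law y e a) ^ (1 / 2 : ℝ)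
    _ = bhattacharyya P Q ^ (disagreements x y).card := by
        simp_rw [hlaw, Finset.prod_ite, Finset.prod_const_one, mul_one, Finset.prod_const,
          disagreements]

variable [Fintype κ] [MeasurableSpace Ω]

/-- The labels `X` are independent and uniform, and given `X` the edge weights `G` are independent
with law `P` inside communities and `Q` across them. The joint law is prescribed on atoms, which
also makes sense for non-measurable `X` and `G`. -/
def IsWeightedSBM (μ : Measure Ω) (X : Ω → ι → κ) (G : Ω → NodePair ι → W) (P Q : PMF W) : Prop :=
  ∀ x g, μ {ω | X ω = x ∧ G ω = g} =
    (Fintype.card κ : ℝ≥0∞)⁻¹ ^ Fintype.card ι * likelihood P Q x g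

variable {μ : Measure Ω} {X : Ω → ι → κ} {G : Ω → NodePair ι → W} {P Q : PMF W}
  {est : (NodePair ι → W) → ι → κ}

lemma IsWeightedSBM.of_toReal [Nonempty κ] [IsFiniteMeasure μ]
    (h : ∀ x g, (μ {ω | X ω = x ∧ G ω = g}).toReal = (Fintype.card κ : ℝ)⁻¹ ^ Fintype.card ι *
      ∏ e : NodePair ι, ((if x e.1.1 = x e.1.2 then P else Q) (g e)).toReal) :
    IsWeightedSBM μ X G P Q := by
  intro x g
  have hprior : (Fintype.card κ : ℝ≥0∞)⁻¹ ^ Fintype.card ι ≠ ⊤ :=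
    ENNReal.pow_ne_top (ENNReal.inv_ne_top.2 (Nat.cast_ne_zero.2 Fintype.card_ne_zero))
  have hlikelihood : likelihood P Q x g ≠ ⊤ := ENNReal.prod_ne_top fun e _ => PMF.apply_ne_top _ _
  rw [← ENNReal.toReal_eq_toReal_iff' (measure_ne_top _ _) (ENNReal.mul_ne_top hprior hlikelihood),
    h, likelihood, ENNReal.toReal_mul, ENNReal.toReal_prod, ENNReal.toReal_pow, ENNReal.toReal_inv,
    ENNReal.toReal_natCast]

lemma IsWeightedSBM.measure_label_le [Countable W] (h : IsWeightedSBM μ X G P Q) (x : ι → κ) :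
    μ {ω | X ω = x} ≤ (Fintype.card κ : ℝ≥0∞)⁻¹ ^ Fintype.card ι := by
  have hcover : {ω | X ω = x} ⊆ ⋃ g, {ω | X ω = x ∧ G ω = g} := fun ω hω =>
    Set.mem_iUnion.2 ⟨G ω, hω, rfl⟩
  calc μ {ω | X ω = x} ≤ ∑' g, μ {ω | X ω = x ∧ G ω = g} :=
        (measure_mono hcover).trans (measure_iUnion_le _)
    _ ≤ (Fintype.card κ : ℝ≥0∞)⁻¹ ^ Fintype.card ι := by
        simp only [h x, ENNReal.tsum_mul_left]
        exact mul_le_of_le_one_right' (tsum_likelihood_le_one P Q x)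

lemma IsWeightedSBM.measure_atom_le (h : IsWeightedSBM μ X G P Q) (hest : IsMAP μ X G est)
    {x : ι → κ} {g : NodePair ι → W} (hfail : ∀ σ : Equiv.Perm κ, est g ≠ σ ∘ x) :
    μ {ω | X ω = x ∧ G ω = g} ≤ (Fintype.card κ : ℝ≥0∞)⁻¹ ^ Fintype.card ι *
      ∑ y ∈ competitors x, (likelihood P Q x g * likelihood P Q y g) ^ (1 / 2 : ℝ) := by
  obtain ⟨σ, hσ⟩ := exists_perm_comp_mem_competitors hfail
  set π := (Fintype.card κ : ℝ≥0∞)⁻¹ ^ Fintype.card ι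
  have hmap : π * likelihood P Q x g ≤ π * likelihood P Q (σ ∘ est g) g := by
    rw [likelihood_perm_comp]
    exact (h x g).symm.trans_le ((hest g x).trans_eq (h _ g))
  calc μ {ω | X ω = x ∧ G ω = g}
      = ((π * likelihood P Q x g) * (π * likelihood P Q x g)) ^ (1 / 2 : ℝ) := by
        rw [mul_self_rpow_half, h]
    _ ≤ ((π * likelihood P Q x g) * (π * likelihood P Q (σ ∘ est g) g)) ^ (1 / 2 : ℝ) := by
        gcongr
    _ = π * (likelihood P Q x g * likelihood P Q (σ ∘ est g) g) ^ (1 / 2 : ℝ) := by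
        rw [mul_mul_mul_comm, ENNReal.mul_rpow_of_nonneg _ _ (by norm_num), mul_self_rpow_half]
    _ ≤ π * ∑ y ∈ competitors x, (likelihood P Q x g * likelihood P Q y g) ^ (1 / 2 : ℝ) := by
        gcongr
        exact Finset.single_le_sum
          (f := fun y => (likelihood P Q x g * likelihood P Q y g) ^ (1 / 2 : ℝ))
          (fun _ _ => zero_le) hσ

lemma IsWeightedSBM.measure_label_inter_recoveryFailure_le [Countable W]
    (h : IsWeightedSBM μ X G P Q) (hest : IsMAP μ X G est) (x : ι → κ) :
    μ ({ω | X ω = x} ∩ recoveryFailure X G est) ≤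
      (Fintype.card κ : ℝ≥0∞)⁻¹ ^ Fintype.card ι *
        ∑ y ∈ competitors x, bhattacharyya P Q ^ (disagreements x y).card := by
  set π := (Fintype.card κ : ℝ≥0∞)⁻¹ ^ Fintype.card ι
  have hcover : {ω | X ω = x} ∩ recoveryFailure X G est ⊆
      ⋃ g, {ω | X ω = x ∧ G ω = g} ∩ recoveryFailure X G est := fun ω hω =>
    Set.mem_iUnion.2 ⟨G ω, ⟨hω.1, rfl⟩, hω.2⟩
  have hatom (g : NodePair ι → W) : μ ({ω | X ω = x ∧ G ω = g} ∩ recoveryFailure X G est) ≤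
      π * ∑ y ∈ competitors x, (likelihood P Q x g * likelihood P Q y g) ^ (1 / 2 : ℝ) := by
    rcases Set.eq_empty_or_nonempty ({ω | X ω = x ∧ G ω = g} ∩ recoveryFailure X G est)
      with hempty | ⟨ω, ⟨rfl, rfl⟩, hω⟩
    · simp [hempty]
    · exact (measure_mono Set.inter_subset_left).trans (h.measure_atom_le hest hω)
  calc μ ({ω | X ω = x} ∩ recoveryFailure X G est)
      ≤ ∑' g, μ ({ω | X ω = x ∧ G ω = g} ∩ recoveryFailure X G est) :=
        (measure_mono hcover).trans (measure_iUnion_le _)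
    _ ≤ ∑' g, π * ∑ y ∈ competitors x,
          (likelihood P Q x g * likelihood P Q y g) ^ (1 / 2 : ℝ) := ENNReal.tsum_le_tsum hatom
    _ = π * ∑ y ∈ competitors x, ∑' g,
          (likelihood P Q x g * likelihood P Q y g) ^ (1 / 2 : ℝ) := by
        rw [ENNReal.tsum_mul_left, Summable.tsum_finsetSum fun _ _ => ENNReal.summable]
    _ ≤ π * ∑ y ∈ competitors x, bhattacharyya P Q ^ (disagreements x y).card := by
        gcongr
        exact tsum_sqrt_likelihood_mul_le P Q x _

/-- The union bound, over the competitors of `x`, on the conditional probability of a recovery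
failure given `X = x`, when every disagreement contributes a factor `exp (-I)`. -/
noncomputable def unionBound (I : ℝ) (x : ι → κ) : ℝ :=
  ∑ y ∈ competitors x, Real.exp (-I) ^ (disagreements x y).card

theorem IsWeightedSBM.measureReal_recoveryFailure_le [Countable W] [Nonempty κ]
    (h : IsWeightedSBM μ X G P Q) (hest : IsMAP μ X G est) {I : ℝ}
    (hI : bhattacharyya P Q ≤ ENNReal.ofReal (Real.exp (-I))) :
    μ.real (recoveryFailure X G est) ≤
      (∑ x : ι → κ, min 1 (unionBound I x)) / (Fintype.card κ : ℝ) ^ Fintype.card ι := by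
  have hunion (x : ι → κ) : ∑ y ∈ competitors x, bhattacharyya P Q ^ (disagreements x y).card ≤
      ENNReal.ofReal (unionBound I x) := by
    rw [unionBound, ENNReal.ofReal_sum_of_nonneg fun _ _ => by positivity]
    gcongr with y
    rw [ENNReal.ofReal_pow (Real.exp_pos _).le]
    gcongr
  have hlabel (x : ι → κ) : μ ({ω | X ω = x} ∩ recoveryFailure X G est) ≤
      (Fintype.card κ : ℝ≥0∞)⁻¹ ^ Fintype.card ι * ENNReal.ofReal (min 1 (unionBound I x)) := by
    rw [ENNReal.ofReal_min, ENNReal.ofReal_one, mul_min, mul_one]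
    refine le_min ((measure_mono Set.inter_subset_left).trans (h.measure_label_le x)) ?_
    exact (h.measure_label_inter_recoveryFailure_le hest x).trans (by gcongr; exact hunion x)
  have hcover : recoveryFailure X G est ⊆ ⋃ x, {ω | X ω = x} ∩ recoveryFailure X G est :=
    fun ω hω => Set.mem_iUnion.2 ⟨X ω, rfl, hω⟩
  have hnonneg (x : ι → κ) : 0 ≤ min 1 (unionBound I x) :=
    le_min zero_le_one (Finset.sum_nonneg fun _ _ => by positivity)
  refine ENNReal.toReal_le_of_le_ofReal
    (div_nonneg (Finset.sum_nonneg fun x _ => hnonneg x) (by positivity)) ?_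
  calc μ (recoveryFailure X G est)
      ≤ ∑ x : ι → κ, μ ({ω | X ω = x} ∩ recoveryFailure X G est) :=
        (measure_mono hcover).trans (measure_iUnion_fintype_le _ _)
    _ ≤ ∑ x : ι → κ, (Fintype.card κ : ℝ≥0∞)⁻¹ ^ Fintype.card ι *
          ENNReal.ofReal (min 1 (unionBound I x)) := Finset.sum_le_sum fun x _ => hlabel x
    _ = ENNReal.ofReal ((∑ x : ι → κ, min 1 (unionBound I x)) /
          (Fintype.card κ : ℝ) ^ Fintype.card ι) := by
        rw [← Finset.mul_sum, ← ENNReal.ofReal_sum_of_nonneg fun x _ => hnonneg x, div_eq_inv_mul,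
          ENNReal.ofReal_mul (by positivity), ENNReal.ofReal_inv_of_pos (by positivity),
          ENNReal.ofReal_pow (by positivity), ENNReal.ofReal_natCast, ENNReal.inv_pow]

end WeightedSBM

/-! ### Balanced labelings -/

lemma sum_pow_card_filter {ι κ R : Type*} [Fintype ι] [DecidableEq ι] [Fintype κ] [CommSemiring R]
    (p : ι → κ → Prop) [∀ i c, Decidable (p i c)] (z : R) :
    ∑ y : ι → κ, z ^ ({i | p i (y i)} : Finset ι).card = ∏ i, ∑ c, if p i c then z else 1 := by
  simp_rw [Fintype.prod_sum, Finset.prod_ite, Finset.prod_const, one_pow, mul_one]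

section Counting

variable {ι κ R : Type*} [Fintype ι] [DecidableEq ι] [Fintype κ] [DecidableEq κ]

lemma sum_pow_hammingDist [CommRing R] (x : ι → κ) (u : R) :
    ∑ y : ι → κ, u ^ hammingDist x y = (1 + (Fintype.card κ - 1) * u) ^ Fintype.card ι := by
  have hsum (a : κ) : ∑ c, (if a ≠ c then u else 1) = 1 + (Fintype.card κ - 1) * u := by
    rw [← Finset.add_sum_erase _ _ (Finset.mem_univ a),
      Finset.sum_congr rfl fun c hc => if_pos (Finset.ne_of_mem_erase hc).symm]
    simp [Finset.card_erase_of_mem, Nat.cast_sub (Fintype.card_pos_iff.2 ⟨a⟩)]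
  exact (sum_pow_card_filter (fun i c => x i ≠ c) u).trans <| by
    simp_rw [hsum, Finset.prod_const, Finset.card_univ]

lemma sum_pow_card_community [CommRing R] (a : κ) (z : R) :
    ∑ x : ι → κ, z ^ (community x a).card = (Fintype.card κ - 1 + z) ^ Fintype.card ι := by
  have hsum : ∑ c, (if c = a then z else 1) = Fintype.card κ - 1 + z := by
    rw [← Finset.sum_erase_add _ _ (Finset.mem_univ a),
      Finset.sum_congr rfl fun c hc => if_neg (Finset.ne_of_mem_erase hc)]
    simp [Finset.card_erase_of_mem, Nat.cast_sub (Fintype.card_pos_iff.2 ⟨a⟩)]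
  exact (sum_pow_card_filter (fun _ c => c = a) z).trans <| by
    simp_rw [hsum, Finset.prod_const, Finset.card_univ]

lemma sum_competitors_pow_hammingDist_le (x : ι → κ) {u : ℝ} (hu : 0 ≤ u) :
    ∑ y ∈ competitors x, u ^ hammingDist x y ≤
      (1 + (Fintype.card κ - 1) * u) ^ Fintype.card ι - 1 := by
  have hne : competitors x ⊆ Finset.univ.erase x := fun y hy =>
    Finset.mem_erase.2 ⟨((Finset.mem_filter_univ _).1 hy).1, Finset.mem_univ y⟩
  calc ∑ y ∈ competitors x, u ^ hammingDist x y
      ≤ ∑ y ∈ Finset.univ.erase x, u ^ hammingDist x y :=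
        Finset.sum_le_sum_of_subset_of_nonneg hne fun _ _ _ => by positivity
    _ = (1 + (Fintype.card κ - 1) * u) ^ Fintype.card ι - 1 := by
        rw [Finset.sum_erase_eq_sub (Finset.mem_univ x), sum_pow_hammingDist, hammingDist_self,
          pow_zero]

lemma card_competitors_le (x : ι → κ) : (competitors x).card ≤ Fintype.card κ ^ Fintype.card ι :=
  (Finset.card_le_univ _).trans_eq Fintype.card_fun

end Counting

section Balanced

variable {ι κ : Type*} [Fintype ι] [Fintype κ] [DecidableEq κ]

/-- Every community has at least the expected fraction of the nodes, up to `δ`. -/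
def IsBalanced (δ : ℝ) (x : ι → κ) : Prop :=
  ∀ a, (1 / Fintype.card κ - δ) * Fintype.card ι ≤ (community x a).card

/-- Chernoff's bound with exponential tilt `δ K / 2`, where `K` is the number of labels. -/
lemma ncard_card_community_lt_le {δ : ℝ} (hδ : 0 ≤ δ) (hδK : Fintype.card κ * δ ≤ 2) (a : κ) :
    ({x : ι → κ | ((community x a).card : ℝ) <
        (1 / Fintype.card κ - δ) * Fintype.card ι}.ncard : ℝ) ≤
      Real.exp (-(Fintype.card κ * δ ^ 2 / 4 * Fintype.card ι)) *
        (Fintype.card κ : ℝ) ^ Fintype.card ι := by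
  classical
  set K : ℝ := (Fintype.card κ : ℝ)
  set M := Fintype.card ι
  have hK : 1 ≤ K := Nat.one_le_cast.2 (Fintype.card_pos_iff.2 ⟨a⟩)
  set t := K * δ / 2 with ht
  have ht_nonneg : 0 ≤ t := by positivity
  have hexp : Real.exp (-t) ≤ 1 - t + t ^ 2 := by
    have h := Real.abs_exp_sub_one_sub_id_le (x := -t) (by rw [abs_neg, abs_of_nonneg] <;> linarith)
    linarith [(abs_le.1 h).2, neg_sq t]
  have hbase : K - 1 + Real.exp (-t) ≤ K * Real.exp ((t ^ 2 - t) / K) := by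
    have h := mul_le_mul_of_nonneg_left (Real.add_one_le_exp ((t ^ 2 - t) / K))
      (zero_le_one.trans hK)
    rw [mul_add, mul_div_cancel₀ _ (by positivity)] at h
    linarith
  rw [Set.ncard_eq_toFinset_card', Set.toFinset_ofPred, Finset.card_filter, Nat.cast_sum]
  calc ∑ x : ι → κ, ((if ((community x a).card : ℝ) < (1 / K - δ) * M then 1 else 0 : ℕ) : ℝ)
      ≤ ∑ x : ι → κ, Real.exp (t * ((1 / K - δ) * M)) * Real.exp (-t) ^ (community x a).card := by
        refine Finset.sum_le_sum fun x _ => ?_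
        rw [← Real.exp_nat_mul, ← Real.exp_add]
        split_ifs with h
        · rw [Nat.cast_one]
          exact Real.one_le_exp (by nlinarith)
        · simpa using (Real.exp_pos _).le
    _ ≤ Real.exp (t * ((1 / K - δ) * M)) * (K * Real.exp ((t ^ 2 - t) / K)) ^ M := by
        rw [← Finset.mul_sum, sum_pow_card_community]
        have : 0 ≤ K - 1 + Real.exp (-t) := by linarith [Real.exp_pos (-t)]
        gcongr
    _ = Real.exp (-(K * δ ^ 2 / 4 * M)) * K ^ M := by
        rw [mul_pow, ← Real.exp_nat_mul, mul_left_comm, ← Real.exp_add, mul_comm]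
        congr 2
        rw [ht]
        field

lemma ncard_not_isBalanced_le {δ : ℝ} (hδ : 0 ≤ δ) (hδK : Fintype.card κ * δ ≤ 2) :
    ({x : ι → κ | ¬IsBalanced δ x}.ncard : ℝ) ≤
      Fintype.card κ * Real.exp (-(Fintype.card κ * δ ^ 2 / 4 * Fintype.card ι)) *
        (Fintype.card κ : ℝ) ^ Fintype.card ι := by
  have hunion : {x : ι → κ | ¬IsBalanced δ x} = ⋃ a ∈ (Finset.univ : Finset κ),
      {x | ((community x a).card : ℝ) < (1 / Fintype.card κ - δ) * Fintype.card ι} := by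
    ext x
    simp [IsBalanced]
  rw [hunion]
  refine (Nat.cast_le.2 (Finset.set_ncard_biUnion_le _ _)).trans ?_
  rw [Nat.cast_sum]
  refine (Finset.sum_le_card_nsmul _ _ _ fun a _ => ncard_card_community_lt_le hδ hδK a).trans_eq ?_
  rw [Finset.card_univ, nsmul_eq_mul, mul_assoc]

/-- The bound obtained for the union bound of a `δ`-balanced labeling of `M` nodes by `K` labels:
the first summand accounts for the competitors within Hamming distance `δ M`, the second one for
the others. -/
noncomputable def balancedUnionBound (K M : ℕ) (δ I : ℝ) : ℝ :=
  ((1 + (K - 1) * Real.exp (-(I * ((2 / K - 3 * δ) * M)))) ^ M - 1) +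
    K ^ M * Real.exp (-(I * (δ / (2 * K ^ 4) * M ^ 2)))

lemma balancedUnionBound_nonneg {K : ℕ} (hK : 0 < K) (M : ℕ) (δ I : ℝ) :
    0 ≤ balancedUnionBound K M δ I := by
  have hK' : (0 : ℝ) ≤ K - 1 := sub_nonneg.2 (Nat.one_le_cast.2 hK)
  exact add_nonneg (sub_nonneg.2 (one_le_pow₀ (le_add_of_nonneg_right (by positivity))))
    (by positivity)

variable [LinearOrder ι]

lemma IsBalanced.hammingDist_mul_le_card_disagreements {δ : ℝ} {x y : ι → κ}
    (hx : IsBalanced δ x) (hd : hammingDist x y ≤ δ * Fintype.card ι) :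
    hammingDist x y * ((2 / Fintype.card κ - 3 * δ) * Fintype.card ι) ≤
      (disagreements x y).card := by
  refine le_trans ?_ (_root_.hammingDist_mul_le_card_disagreements hx)
  gcongr
  linear_combination hd

lemma IsBalanced.sq_le_card_disagreements [Nonempty κ] {δ : ℝ} {x y : ι → κ} (hx : IsBalanced δ x)
    (hδ : δ ≤ 1 / (2 * Fintype.card κ)) (hd : δ * Fintype.card ι ≤ hammingDist x y)
    (hmin : ∀ σ : Equiv.Perm κ, hammingDist x y ≤ hammingDist (σ ∘ x) y) :
    δ / (2 * Fintype.card κ ^ 4) * Fintype.card ι ^ 2 ≤ (disagreements x y).card := by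
  have hK : (0 : ℝ) < Fintype.card κ := Nat.cast_pos.2 Fintype.card_pos
  have hδ' : 1 / (2 * Fintype.card κ) ≤ 1 / Fintype.card κ - δ := by
    have : (1 : ℝ) / Fintype.card κ = 2 * (1 / (2 * Fintype.card κ)) := by field
    linarith
  set s := ⌈1 / (2 * Fintype.card κ) * (Fintype.card ι : ℝ)⌉₊
  have hs : 1 / (2 * Fintype.card κ) * (Fintype.card ι : ℝ) ≤ s := Nat.le_ceil _
  have hcomm (a : κ) : s ≤ (community x a).card :=
    Nat.ceil_le.2 ((by gcongr : _ ≤ _).trans (hx a))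
  have hmin_le : δ * Fintype.card ι ≤ (min s (hammingDist x y) : ℕ) := by
    rw [Nat.cast_min]
    exact le_min (le_trans (by gcongr) hs) hd
  have hcard : ((min s (hammingDist x y) * s : ℕ) : ℝ) ≤
      (Fintype.card κ ^ 3 * (disagreements x y).card : ℕ) :=
    Nat.cast_le.2 (min_mul_le_card_disagreements hcomm hmin)
  push_cast at hcard hmin_le
  have hprod := (mul_le_mul hmin_le hs (by positivity) (by positivity)).trans hcard
  refine le_of_mul_le_mul_left (le_trans (le_of_eq ?_) hprod) (pow_pos hK 3)
  field

lemma IsBalanced.unionBound_le [Nonempty κ] {δ I : ℝ} {x : ι → κ} (hx : IsBalanced δ x)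
    (hδ : δ ≤ 1 / (2 * Fintype.card κ)) (hI : 0 ≤ I) :
    unionBound I x ≤ balancedUnionBound (Fintype.card κ) (Fintype.card ι) δ I := by
  set u := Real.exp (-(I * ((2 / Fintype.card κ - 3 * δ) * Fintype.card ι)))
  set v := Real.exp (-(I * (δ / (2 * Fintype.card κ ^ 4) * Fintype.card ι ^ 2)))
  have hterm (y : ι → κ) (hy : y ∈ competitors x) :
      Real.exp (-I) ^ (disagreements x y).card ≤ u ^ hammingDist x y + v := by
    simp only [u, v, ← Real.exp_nat_mul]
    rcases le_total (hammingDist x y : ℝ) (δ * Fintype.card ι) with hd | hd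
    · refine le_add_of_le_of_nonneg (Real.exp_le_exp.2 ?_) (Real.exp_pos _).le
      linear_combination I * hx.hammingDist_mul_le_card_disagreements hd
    · refine le_add_of_nonneg_of_le (Real.exp_pos _).le (Real.exp_le_exp.2 ?_)
      linear_combination
        I * hx.sq_le_card_disagreements hδ hd ((Finset.mem_filter_univ _).1 hy).2
  calc unionBound I x ≤ ∑ y ∈ competitors x, u ^ hammingDist x y + (competitors x).card * v := by
        rw [← nsmul_eq_mul, ← Finset.sum_const, ← Finset.sum_add_distrib]
        exact Finset.sum_le_sum hterm
    _ ≤ balancedUnionBound (Fintype.card κ) (Fintype.card ι) δ I := by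
        unfold balancedUnionBound
        gcongr
        · exact sum_competitors_pow_hammingDist_le x (Real.exp_pos _).le
        · exact_mod_cast card_competitors_le x

lemma sum_min_unionBound_le [Nonempty κ] {δ I : ℝ} (hδ_nonneg : 0 ≤ δ)
    (hδ : δ ≤ 1 / (2 * Fintype.card κ)) (hI : 0 ≤ I) :
    (∑ x : ι → κ, min 1 (unionBound I x)) / (Fintype.card κ : ℝ) ^ Fintype.card ι ≤
      Fintype.card κ * Real.exp (-(Fintype.card κ * δ ^ 2 / 4 * Fintype.card ι)) +
        balancedUnionBound (Fintype.card κ) (Fintype.card ι) δ I := by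
  classical
  have hK : (0 : ℝ) < Fintype.card κ := Nat.cast_pos.2 Fintype.card_pos
  have hδK : Fintype.card κ * δ ≤ 2 := by
    rw [le_div_iff₀ (by positivity)] at hδ
    linarith
  set B := balancedUnionBound (Fintype.card κ) (Fintype.card ι) δ I
  have hB : 0 ≤ B := balancedUnionBound_nonneg Fintype.card_pos _ _ _
  have hterm (x : ι → κ) :
      min 1 (unionBound I x) ≤ (if ¬IsBalanced δ x then 1 else 0 : ℕ) + B := by
    by_cases hx : IsBalanced δ x
    · simpa [hx] using Or.inr (hx.unionBound_le hδ hI)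
    · simpa [hx] using Or.inl hB
  have hncard := ncard_not_isBalanced_le (ι := ι) hδ_nonneg hδK
  rw [Set.ncard_eq_toFinset_card', Set.toFinset_ofPred, Finset.card_filter, Nat.cast_sum] at hncard
  rw [div_le_iff₀ (by positivity), add_mul]
  refine (Finset.sum_le_sum fun x _ => hterm x).trans ?_
  rw [Finset.sum_add_distrib]
  refine add_le_add hncard (le_of_eq ?_)
  rw [Finset.sum_const, Finset.card_univ, Fintype.card_fun, nsmul_eq_mul, Nat.cast_pow, mul_comm]

lemma unionBound_le {I : ℝ} (hI : 0 ≤ I) (x : ι → κ) :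
    unionBound I x ≤ (Fintype.card κ : ℝ) ^ Fintype.card ι * Real.exp (-I) := by
  have hterm (y : ι → κ) (hy : y ∈ competitors x) :
      Real.exp (-I) ^ (disagreements x y).card ≤ Real.exp (-I) :=
    pow_le_of_le_one (Real.exp_pos _).le (Real.exp_le_one_iff.2 (neg_nonpos.2 hI))
      (card_disagreements_pos (ne_perm_comp_of_mem_competitors hy)).ne'
  refine (Finset.sum_le_card_nsmul _ _ _ hterm).trans ?_
  rw [nsmul_eq_mul]
  gcongr
  exact_mod_cast card_competitors_le x

end Balanced

/-! ### Asymptotics -/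

section Asymptotics

open Filter Topology

lemma tendsto_one_add_mul_exp_neg_pow_sub_one {T : Type*} {l : Filter T} {M : T → ℕ} {θ : T → ℝ}
    {a η : ℝ} (ha : 0 ≤ a) (hη : 0 < η) (hM : Tendsto M l atTop)
    (hθ : ∀ᶠ t in l, (1 + η) * Real.log (M t) ≤ θ t) :
    Tendsto (fun t => (1 + a * Real.exp (-θ t)) ^ M t - 1) l (𝓝 0) := by
  have hlog : Tendsto (fun t => η * Real.log (M t)) l atTop :=
    (Real.tendsto_log_atTop.comp (tendsto_natCast_atTop_atTop.comp hM)).const_mul_atTop hη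
  have hlim : Tendsto (fun t => Real.exp (a * Real.exp (-(η * Real.log (M t)))) - 1) l (𝓝 0) := by
    simpa [Function.comp_def] using ((Real.continuous_exp.tendsto _).comp
      ((Real.tendsto_exp_neg_atTop_nhds_zero.comp hlog).const_mul a)).sub_const 1
  refine tendsto_of_tendsto_of_tendsto_of_le_of_le' tendsto_const_nhds hlim ?_ ?_
  · exact .of_forall fun t =>
      sub_nonneg.2 (one_le_pow₀ (le_add_of_nonneg_right (by positivity)))
  · filter_upwards [hθ, hM.eventually_gt_atTop 0] with t ht hMt
    have hM_pos : (0 : ℝ) < M t := Nat.cast_pos.2 hMt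
    have hexp : M t * Real.exp (-θ t) ≤ Real.exp (-(η * Real.log (M t))) := by
      nth_rw 1 [← Real.exp_log hM_pos]
      rw [← Real.exp_add]
      exact Real.exp_le_exp.2 (by linarith)
    gcongr
    calc (1 + a * Real.exp (-θ t)) ^ M t ≤ Real.exp (a * Real.exp (-θ t)) ^ M t := by
          gcongr
          linarith [Real.add_one_le_exp (a * Real.exp (-θ t))]
      _ = Real.exp (a * (M t * Real.exp (-θ t))) := by
          rw [← Real.exp_nat_mul]
          ring_nf
      _ ≤ Real.exp (a * Real.exp (-(η * Real.log (M t)))) := by gcongr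

lemma tendsto_pow_mul_exp_neg_mul {T : Type*} {l : Filter T} {M : T → ℕ} {v : T → ℝ} {a : ℝ}
    (ha : 0 < a) (hM : Tendsto M l atTop) (hv : Tendsto v l atTop) :
    Tendsto (fun t => a ^ M t * Real.exp (-(v t * M t))) l (𝓝 0) := by
  have hexponent : Tendsto (fun t => (v t - Real.log a) * M t) l atTop :=
    (tendsto_atTop_add_const_right l (-Real.log a) hv).atTop_mul_atTop₀
      (tendsto_natCast_atTop_atTop.comp hM)
  refine (Real.tendsto_exp_neg_atTop_nhds_zero.comp hexponent).congr fun t => ?_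
  nth_rw 2 [← Real.exp_log ha]
  rw [← Real.exp_nat_mul, ← Real.exp_add, Function.comp_apply]
  ring_nf

lemma tendsto_balancedUnionBound {T : Type*} {l : Filter T} {K : ℕ} {M : T → ℕ} {I : T → ℝ}
    {c δ : ℝ} (hK : 0 < K) (hc : 0 < c) (hδ : 0 < δ) (hcδ : 1 < c * (K / 2 * (2 / K - 3 * δ)))
    (hM : Tendsto M l atTop) (hI : ∀ᶠ t in l, c * (K / 2 * Real.log (M t)) ≤ I t * M t) :
    Tendsto (fun t => balancedUnionBound K (M t) δ (I t)) l (𝓝 0) := by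
  have hK_pos : (0 : ℝ) < K := Nat.cast_pos.2 hK
  have hslope : 0 ≤ 2 / K - 3 * δ := by
    by_contra! h
    have := mul_neg_of_pos_of_neg (mul_pos hc (half_pos hK_pos)) h
    linarith
  have hnear := tendsto_one_add_mul_exp_neg_pow_sub_one (l := l) (M := M)
    (θ := fun t => I t * ((2 / K - 3 * δ) * M t)) (a := K - 1)
    (sub_nonneg.2 (Nat.one_le_cast.2 hK)) (sub_pos.2 hcδ) hM <| by
      filter_upwards [hI] with t ht
      linear_combination (2 / K - 3 * δ) * ht
  have hIM : Tendsto (fun t => I t * M t) l atTop :=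
    tendsto_atTop_mono' l hI (((Real.tendsto_log_atTop.comp
      (tendsto_natCast_atTop_atTop.comp hM)).const_mul_atTop (half_pos hK_pos)).const_mul_atTop hc)
  have hfar := tendsto_pow_mul_exp_neg_mul hK_pos hM
    (hIM.const_mul_atTop (show 0 < δ / (2 * K ^ 4) by positivity))
  rw [← add_zero (0 : ℝ)]
  refine hnear.add (hfar.congr fun t => ?_)
  ring_nf

lemma exists_one_lt_mul_log_le_of_tendsto {T : Type*} {l : Filter T} [l.NeBot] {M : T → ℕ}
    {s : T → ℝ} {k J L : ℝ} (hk : 0 ≤ k) (hs : ∀ t, 0 < s t) (hM : ∀ᶠ t in l, 0 < M t)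
    (hlim : Tendsto (fun t => k * Real.log (M t) / (s t * M t)) l (𝓝 L)) (hJ : L < J) :
    ∃ c, 1 < c ∧ ∀ᶠ t in l, c * (k * Real.log (M t)) ≤ s t * J * M t := by
  have hL : 0 ≤ L := ge_of_tendsto' hlim fun t => by
    have := Real.log_natCast_nonneg (M t)
    have := (hs t).le
    positivity
  obtain ⟨J', hLJ', hJ'J⟩ := exists_between hJ
  have hJ' : 0 < J' := hL.trans_lt hLJ'
  refine ⟨J / J', (one_lt_div hJ').2 hJ'J, ?_⟩
  filter_upwards [hlim.eventually_lt_const hLJ', hM] with t ht hMt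
  rw [div_lt_iff₀ (mul_pos (hs t) (Nat.cast_pos.2 hMt))] at ht
  calc J / J' * (k * Real.log (M t)) ≤ J / J' * (J' * (s t * M t)) := by
        have : 0 < J := hJ'.trans hJ'J
        gcongr
    _ = s t * J * M t := by field

end Asymptotics

/-! ### The two regimes -/

section Regimes

open Filter Topology

variable {T : Type*} {l : Filter T} {ι : T → Type*} [∀ t, Fintype (ι t)] [∀ t, LinearOrder (ι t)]
  {κ : Type*} [Fintype κ] [DecidableEq κ] [Nonempty κ] {W : Type*} [Countable W]
  {Ω : T → Type*} [∀ t, MeasurableSpace (Ω t)] {μ : ∀ t, Measure (Ω t)} {X : ∀ t, Ω t → ι t → κ}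
  {G : ∀ t, Ω t → NodePair (ι t) → W} {est : ∀ t, (NodePair (ι t) → W) → ι t → κ}
  {P Q : T → PMF W} {I : T → ℝ}

theorem tendsto_recoveryFailure_of_card_le {M₀ : ℕ}
    (h : ∀ t, IsWeightedSBM (μ t) (X t) (G t) (P t) (Q t))
    (hest : ∀ t, IsMAP (μ t) (X t) (G t) (est t))
    (hPQ : ∀ t, bhattacharyya (P t) (Q t) ≤ ENNReal.ofReal (Real.exp (-I t)))
    (hM : ∀ᶠ t in l, Fintype.card (ι t) ≤ M₀) (hI : Tendsto I l atTop) :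
    Tendsto (fun t => (μ t).real (recoveryFailure (X t) (G t) (est t))) l (𝓝 0) := by
  have hlim : Tendsto (fun t => (Fintype.card κ : ℝ) ^ M₀ * Real.exp (-I t)) l (𝓝 0) := by
    simpa using (Real.tendsto_exp_neg_atTop_nhds_zero.comp hI).const_mul _
  refine tendsto_of_tendsto_of_tendsto_of_le_of_le' tendsto_const_nhds hlim
    (.of_forall fun _ => measureReal_nonneg) ?_
  filter_upwards [hM, hI.eventually_ge_atTop 0] with t hMt hIt
  refine ((h t).measureReal_recoveryFailure_le (hest t) (hPQ t)).trans ?_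
  rw [div_le_iff₀ (by positivity)]
  have hterm (x : ι t → κ) :
      min 1 (unionBound (I t) x) ≤ (Fintype.card κ : ℝ) ^ M₀ * Real.exp (-I t) := by
    refine (min_le_right _ _).trans ((unionBound_le hIt x).trans ?_)
    gcongr
    exact Nat.one_le_cast.2 Fintype.card_pos
  refine (Finset.sum_le_card_nsmul _ _ _ fun x _ => hterm x).trans_eq ?_
  rw [nsmul_eq_mul, Finset.card_univ, Fintype.card_fun, Nat.cast_pow, mul_comm]

theorem tendsto_recoveryFailure_of_log_card_le {c : ℝ} (hc : 1 < c)
    (h : ∀ t, IsWeightedSBM (μ t) (X t) (G t) (P t) (Q t))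
    (hest : ∀ t, IsMAP (μ t) (X t) (G t) (est t))
    (hPQ : ∀ t, bhattacharyya (P t) (Q t) ≤ ENNReal.ofReal (Real.exp (-I t)))
    (hI_nonneg : ∀ t, 0 ≤ I t) (hM : Tendsto (fun t => Fintype.card (ι t)) l atTop)
    (hI : ∀ᶠ t in l, c * (Fintype.card κ / 2 * Real.log (Fintype.card (ι t))) ≤
      I t * Fintype.card (ι t)) :
    Tendsto (fun t => (μ t).real (recoveryFailure (X t) (G t) (est t))) l (𝓝 0) := by
  have hc_pos : 0 < c := zero_lt_one.trans hc
  have hK : (0 : ℝ) < Fintype.card κ := Nat.cast_pos.2 Fintype.card_pos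
  set δ := (c - 1) / (4 * Fintype.card κ * c)
  have hδ_pos : 0 < δ := div_pos (sub_pos.2 hc) (by positivity)
  have hδ : δ ≤ 1 / (2 * Fintype.card κ) := by
    rw [div_le_div_iff₀ (by positivity) (by positivity)]
    nlinarith
  have hcδ : 1 < c * (Fintype.card κ / 2 * (2 / Fintype.card κ - 3 * δ)) := by
    have : c * (Fintype.card κ / 2 * (2 / Fintype.card κ - 3 * δ)) = 1 + 5 / 8 * (c - 1) := by
      simp only [δ]
      field
    linarith
  have hunbalanced : Tendsto (fun t => Fintype.card κ *
      Real.exp (-(Fintype.card κ * δ ^ 2 / 4 * Fintype.card (ι t)))) l (𝓝 0) := by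
    simpa using (Real.tendsto_exp_neg_atTop_nhds_zero.comp
      ((tendsto_natCast_atTop_atTop.comp hM).const_mul_atTop
        (show 0 < Fintype.card κ * δ ^ 2 / 4 by positivity))).const_mul (Fintype.card κ : ℝ)
  refine squeeze_zero (fun _ => measureReal_nonneg) (fun t =>
    ((h t).measureReal_recoveryFailure_le (hest t) (hPQ t)).trans
      (sum_min_unionBound_le hδ_pos.le hδ (hI_nonneg t))) ?_
  simpa using hunbalanced.add (tendsto_balancedUnionBound Fintype.card_pos hc_pos hδ_pos hcδ hM hI)

theorem MAP_failure_tendsto_zero_CO_one_general [l.NeBot] {α β : ℝ} (hα : 0 ≤ α) (hβ : 0 ≤ β)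
    {r : T → ℕ} {ρ : T → ℝ} (hr : ∀ t, 0 < r t) (hρ : ∀ t, 0 < ρ t)
    (hp : ∀ t, α * ρ t ≤ 1) (hq : ∀ t, β * ρ t ≤ 1)
    {G : ∀ t, Ω t → NodePair (ι t) → ℕ} {est : ∀ t, (NodePair (ι t) → ℕ) → ι t → κ}
    (h : ∀ t, IsWeightedSBM (μ t) (X t) (G t)
      (binomialNat (ENNReal.ofReal (α * ρ t)) (ENNReal.ofReal_le_one.2 (hp t)) (r t ^ 2))
      (binomialNat (ENNReal.ofReal (β * ρ t)) (ENNReal.ofReal_le_one.2 (hq t)) (r t ^ 2)))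
    (hest : ∀ t, IsMAP (μ t) (X t) (G t) (est t))
    (hreg :
      ((∃ M₀, ∀ᶠ t in l, Fintype.card (ι t) ≤ M₀) ∧
        Tendsto (fun t => (r t : ℝ) * √(ρ t)) l atTop ∧ α ≠ β) ∨
      (Tendsto (fun t => Fintype.card (ι t)) l atTop ∧
        ∃ L : ℝ,
          Tendsto (fun t => (Fintype.card κ : ℝ) / 2 * Real.log (Fintype.card (ι t)) /
            ((r t : ℝ) ^ 2 * ρ t * Fintype.card (ι t))) l (𝓝 L) ∧
          L < (α + β) / 2 - √(α * β))) :
    Tendsto (fun t => (μ t).real (recoveryFailure (X t) (G t) (est t))) l (𝓝 0) := by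
  set J := (α + β) / 2 - √(α * β)
  have hJ : 0 ≤ J := sub_nonneg.2 (sqrt_mul_le_half_add hα hβ)
  have hrρ (t : T) : 0 < (r t : ℝ) ^ 2 * ρ t :=
    mul_pos (pow_pos (Nat.cast_pos.2 (hr t)) 2) (hρ t)
  have hPQ (t : T) := bhattacharyya_binomialNat_le_exp hα hβ (hρ t).le (hp t) (hq t) (r t ^ 2)
  simp only [Nat.cast_pow] at hPQ
  rcases hreg with ⟨⟨M₀, hM⟩, hlim, hne⟩ | ⟨hM, L, hlim, hL⟩
  · have hI : Tendsto (fun t => (r t : ℝ) ^ 2 * ρ t) l atTop :=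
      (hlim.atTop_mul_atTop₀ hlim).congr fun t => by
        rw [mul_mul_mul_comm, Real.mul_self_sqrt (hρ t).le, sq]
    exact tendsto_recoveryFailure_of_card_le h hest hPQ hM
      (hI.atTop_mul_const (sub_pos.2 (sqrt_mul_lt_half_add hα hβ hne)))
  · obtain ⟨c, hc, hI⟩ := exists_one_lt_mul_log_le_of_tendsto (by positivity) hrρ
      (hM.eventually_gt_atTop 0) hlim hL
    exact tendsto_recoveryFailure_of_log_card_le hc h hest hPQ
      (fun t => mul_nonneg (hrρ t).le hJ) hM hI

end Regimes

/-- Under CO-1 measurements of `SSBM(N,K,αρ(N),βρ(N))` with `ρ(N) → 0`, the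
probability that the MAP estimator fails to recover the c-node profile vector `x ∈ [K]^M`
(up to relabeling of the community indices) tends to zero in either of the regimes:
(i) `M` finite, `r√ρ(N) → ∞` and `α ≠ β`; or (ii) `M, N → ∞` and
`(α+β)/2 − √(αβ) > lim (K/2)·log M/(r²ρ(N)M)`. -/
theorem MAP_failure_tendsto_zero_CO_one
    (K : ℕ) (hK : 0 < K)
    (α β : ℝ) (hα : 0 < α) (hβ : 0 < β)
    -- the sequences of fine sizes, measurement sizes, coverage sizes and probability scalings
    (N M r : ℕ → ℕ) (ρ : ℕ → ℝ)
    (hρpos : ∀ n, 0 < ρ n) (hρlt : ∀ n, ρ n < 1)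
    (hp1 : ∀ n, α * ρ n ≤ 1) (hq1 : ∀ n, β * ρ n ≤ 1)
    (hrpos : ∀ n, 0 < r n) (hrM : ∀ n, r n * M n ≤ N n)
    -- `ρ(N) → 0` as `N → ∞`
    (hρ0 : Filter.Tendsto ρ Filter.atTop (nhds 0))
    -- the CO-1 coarse model for each `n`: c-node labels `X` i.i.d. uniform on `[K]`, weighted
    -- coarse graph `G` with conditionally independent `Binomial(r², p)`/`Binomial(r², q)`
    -- weights, expressed through the joint point masses
    (Ω : ℕ → Type) (mΩ : ∀ n, MeasurableSpace (Ω n)) (μ : ∀ n, Measure (Ω n))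
    (hprob : ∀ n, IsProbabilityMeasure (μ n))
    (X : ∀ n, Ω n → Fin (M n) → Fin K)
    (G : ∀ n, Ω n → {e : Fin (M n) × Fin (M n) // e.1 < e.2} → ℕ)
    (hjoint : ∀ (n : ℕ) (x : Fin (M n) → Fin K)
      (g : {e : Fin (M n) × Fin (M n) // e.1 < e.2} → ℕ),
      ((μ n) {ω | X n ω = x ∧ G n ω = g}).toReal =
        ((K : ℝ)⁻¹) ^ (M n) *
          ∏ e : {e : Fin (M n) × Fin (M n) // e.1 < e.2},
            ((if x e.1.1 = x e.1.2 then
                binomialNat (ENNReal.ofReal (α * ρ n))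
                  (ENNReal.ofReal_le_one.mpr (hp1 n)) (r n ^ 2)
              else
                binomialNat (ENNReal.ofReal (β * ρ n))
                  (ENNReal.ofReal_le_one.mpr (hq1 n)) (r n ^ 2)) (g e)).toReal)
    -- a MAP estimator of the c-node profile vector from the coarse measurements
    (est : ∀ n, ({e : Fin (M n) × Fin (M n) // e.1 < e.2} → ℕ) → Fin (M n) → Fin K)
    (hMAP : ∀ n g y,
      (μ n) {ω | X n ω = y ∧ G n ω = g} ≤ (μ n) {ω | X n ω = est n g ∧ G n ω = g})
    -- either regime (i) or regime (ii)
    (hreg :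
      ((∃ M₀, ∀ n, M n = M₀) ∧
        Filter.Tendsto (fun n => (r n : ℝ) * Real.sqrt (ρ n)) Filter.atTop Filter.atTop ∧
        α ≠ β) ∨
      (Filter.Tendsto M Filter.atTop Filter.atTop ∧
        Filter.Tendsto N Filter.atTop Filter.atTop ∧
        ∃ L : ℝ,
          Filter.Tendsto (fun n =>
              ((K : ℝ) / 2) * Real.log (M n) / ((r n : ℝ) ^ 2 * ρ n * (M n : ℝ)))
            Filter.atTop (nhds L) ∧
          (α + β) / 2 - Real.sqrt (α * β) > L)) :
    -- conclusion: the failure probability (up to relabeling of the community indices)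
    -- tends to zero
    Filter.Tendsto (fun n =>
        ((μ n) {ω | ∀ π : Equiv.Perm (Fin K), est n (G n ω) ≠ π ∘ X n ω}).toReal)
      Filter.atTop (nhds 0) := by
  have : Nonempty (Fin K) := ⟨⟨0, hK⟩⟩
  refine MAP_failure_tendsto_zero_CO_one_general hα.le hβ.le hrpos hρpos hp1 hq1
    (fun n => .of_toReal (by simpa only [Fintype.card_fin] using hjoint n)) hMAP ?_
  simp only [Fintype.card_fin]
  exact hreg.imp (fun ⟨⟨M₀, hM⟩, h⟩ => ⟨⟨M₀, .of_forall fun n => (hM n).le⟩, h⟩)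
    fun ⟨hM, _, h⟩ => ⟨hM, h⟩
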